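/- Let I = ⟨[n],[m],{v_i}⟩ be a fair division instance in which every item is a good, a chore, or a nonnegatively-valued item, and let Ī = ⟨[n],{1,…,m+1},{v̄_i}⟩ be a perturbed instance satisfying: v̄_i(m+1) = λ/2 for all i; for j ≤ m, v_i(j) − ε ≤ v̄_i(j) ≤ v_i(j) with v̄_i(j) = 0 exactly when v_i(j) = 0, where λ > 0 lower-bounds all positive differences v_i(S) − v_i(T) and 0 < ε < min{λ, nω}/(2m) with ω > 0 lower-bounding all positive social-welfare differences between allocations of I; additionally Ī is non-degenerate: for every simple cycle (j_1,i_1,…,j_k,i_k,j_1) in the complete bipartite graph between agents and items of Ī whose edge values v̄_{i_ℓ}(j_ℓ), v̄_{i_ℓ}(j_{ℓ+1}) are all nonzero, the product ∏_{ℓ=1}^k v̄_{i_ℓ}(j_ℓ)/v̄_{i_ℓ}(j_{ℓ+1}) ≠ 1. Let η = λ/(2 m n V) with V = max_{i,j}|v̄_i(j)|. Then there exist w* ∈ Δ_{n−1} and an allocation A of {1,…,m+1} maximizing Σ_i (w*_i + η) v̄_i(A_i) over all allocations such that A is IEF1 for the instance Ī. -/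

import Mathlib

open Finset

/-- Value of a bundle under an additive valuation. -/
def bval {α : Type*} (u : α → ℝ) (S : Finset α) : ℝ := ∑ j ∈ S, u j

/-- An allocation: every item belongs to exactly one agent's bundle. -/
def IsAlloc {n : ℕ} {I : Type*} (A : Fin n → Finset I) : Prop :=
  ∀ j : I, ∃! i : Fin n, j ∈ A i

/-- IEF1 with respect to valuations `u`. -/
def IEF1 {n : ℕ} {I : Type*} [DecidableEq I] (u : Fin n → I → ℝ)
    (A : Fin n → Finset I) : Prop :=
  ∀ i : Fin n, ∃ S : Finset I, S.card ≤ 1 ∧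
    ∀ j : Fin n, bval (u i) (A j) ≤ bval (u i) (symmDiff (A i) S)

/-!
For positive weights `W`, an allocation maximizes the weighted welfare if every item goes to an
agent with the largest weighted value, the price of the item, and an agent's weighted value for
their own bundle is then its price. Let `C i` be the closed set of simplex points `w` such that, for
the weights `w + η`, some allocation of this kind gives agent `i` a bundle of the largest price. If
`w i = 0`, agent `i` values each item at most `η * V` after weighting, while the item `m + 1`, worth
the same to everybody, makes another bundle more expensive; hence the `C i` satisfy the hypothesis
of the KKM theorem and have a common point `w`.

Let `T` be the least, over the agents `i`, of these largest prices. One of the allocations gives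
nobody more than `T`, and each agent gets at least `T` in some of them. By non-degeneracy the graph
joining the items to the agents who pay their prices is a forest, so among any nonempty set of
agents one shares at most one item with the rest. Serving that agent last, with the unshared items,
one obtains an allocation in which nobody gets more than `T` and each agent reaches `T` after adding
or removing at most one item, which is IEF1.

The KKM theorem is obtained from the version for sets `D i` containing the faces `w i = 0`, applied
to the sets where the distance to `C i` is at least the fraction `w i` of the sum of all these
distances; that version follows from Scarf's lemma on a family of rankings, applied to a fine finite
net of the simplex.
-/

section Scarf

variable {N X α : Type*} [LinearOrder α] {r : N → X → α} {τ ρ : Finset X} {k : N} {v z : X}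

/-- A finite set `ρ` is dominating for a family `r` of rankings if every element is, in at least
one of them, ranked no higher than the whole of `ρ`; these are the sets of Scarf's lemma. -/
def IsDominating (r : N → X → α) (ρ : Finset X) : Prop :=
  ∀ x, ∃ i, ∀ s ∈ ρ, r i x ≤ r i s

/-- The elements which every ranking other than the `k`-th places above the lowest element of
`τ`. -/
def upperRegion (r : N → X → α) (τ : Finset X) (k : N) : Set X :=
  {x | ∀ i ≠ k, ∃ s ∈ τ, r i s < r i x}

/-- The index `k` is redundant for `τ` if each element of `τ` is the lowest one in some ranking
other than the `k`-th. -/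
def IsRedundant (r : N → X → α) (τ : Finset X) (k : N) : Prop :=
  ∀ s ∈ τ, ∃ i ≠ k, ∀ t ∈ τ, r i s ≤ r i t

/-- A system of slack elements, one for each ranking: the `i`-th is the lowest in the `i`-th
ranking and lies above all non-slack elements in the other rankings. -/
structure IsSlack (r : N → X → α) (e : N → X) : Prop where
  le : ∀ i x, r i (e i) ≤ r i x
  lt : ∀ i k x, k ≠ i → x ∉ Set.range e → r k x < r k (e i)

lemma IsDominating.mono (hρ : IsDominating r ρ) (h : τ ⊆ ρ) : IsDominating r τ := fun x =>
  (hρ x).imp fun _ hi s hs => hi s (h hs)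

lemma IsRedundant.notMem_of_mem_upperRegion (hk : IsRedundant r τ k) (hz : z ∈ upperRegion r τ k) :
    z ∉ τ := by
  intro hzτ
  obtain ⟨i, hik, hi⟩ := hk z hzτ
  obtain ⟨s, hs, hlt⟩ := hz i hik
  exact (hi s hs).not_gt hlt

lemma IsDominating.eq_of_mem_upperRegion (hτ : IsDominating r τ) {i j : N}
    (hi : z ∈ upperRegion r τ i) (hj : z ∈ upperRegion r τ j) : i = j := by
  obtain ⟨l, hl⟩ := hτ z
  have eq_of_mem : ∀ k, z ∈ upperRegion r τ k → l = k := fun k hk => by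
    by_contra hlk
    obtain ⟨s, hs, hlt⟩ := hk l hlk
    exact (hl s hs).not_gt hlt
  exact (eq_of_mem i hi).symm.trans (eq_of_mem j hj)

lemma IsDominating.insert_of_isMaxOn [DecidableEq X] (hτ : IsDominating r τ)
    (hz : z ∈ upperRegion r τ k) (hmax : IsMaxOn (r k) (upperRegion r τ k) z) :
    IsDominating r (insert z τ) := by
  intro x
  by_cases hx : x ∈ upperRegion r τ k
  · obtain ⟨i, hi⟩ := hτ z
    obtain rfl : i = k := by
      by_contra hik
      obtain ⟨s, hs, hlt⟩ := hz i hik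
      exact (hi s hs).not_gt hlt
    exact ⟨i, forall_mem_insert _ _ _ |>.2 ⟨hmax hx, fun s hs => (hmax hx).trans (hi s hs)⟩⟩
  · simp only [upperRegion, Set.mem_ofPred_eq, not_forall, not_exists, not_and, not_lt] at hx
    obtain ⟨i, hik, hi⟩ := hx
    obtain ⟨s, hs, hlt⟩ := hz i hik
    exact ⟨i, forall_mem_insert _ _ _ |>.2 ⟨(hi s hs).trans hlt.le, hi⟩⟩

section Fintype

variable [Fintype N]

lemma IsDominating.exists_isRedundant_of_insert [DecidableEq X] (hr : ∀ i, Function.Injective (r i))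
    (hcard : #τ + 1 = Fintype.card N) (hv : v ∉ τ) (hd : IsDominating r (insert v τ)) :
    ∃ k, IsRedundant r τ k ∧ v ∈ upperRegion r τ k ∧ IsMaxOn (r k) (upperRegion r τ k) v := by
  classical
  obtain ⟨k, hk⟩ := hd v
  choose f hf using hd
  have f_ne : ∀ s ∈ τ, f s ≠ k := by
    rintro s hs rfl
    exact hv (hr _ ((hf s v (mem_insert_self v τ)).antisymm (hk s (mem_insert_of_mem hs))) ▸ hs)
  have f_injOn : Set.InjOn f τ := fun s hs t ht hst =>
    hr (f s) ((hf s t (mem_insert_of_mem ht)).antisymm (hst ▸ hf t s (mem_insert_of_mem hs)))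
  have f_surjOn : Set.SurjOn f τ (univ.erase k : Finset N) := by
    refine surjOn_of_injOn_of_card_le f (fun s hs => by simpa using f_ne s hs) f_injOn ?_
    rw [card_erase_of_mem (mem_univ k), card_univ]
    omega
  refine ⟨k, fun s hs => ⟨f s, f_ne s hs, fun t ht => hf s t (mem_insert_of_mem ht)⟩, ?_, ?_⟩
  · intro i hi
    obtain ⟨s, hs, rfl⟩ := f_surjOn (by simpa using hi)
    exact ⟨s, hs, (hf s v (mem_insert_self v τ)).lt_of_ne ((hr _).ne (ne_of_mem_of_not_mem hs hv))⟩
  · intro x hx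
    obtain hx' | hx' := eq_or_ne (f x) k
    · exact hx' ▸ hf x v (mem_insert_self v τ)
    · obtain ⟨s, hs, hlt⟩ := hx (f x) hx'
      exact absurd hlt (hf x s (mem_insert_of_mem hs)).not_gt

lemma IsDominating.exists_isRedundant_iff (hr : ∀ i, Function.Injective (r i)) (hτ : τ.Nonempty)
    (hcard : #τ + 1 = Fintype.card N) (hd : IsDominating r τ) :
    ∃ i j, i ≠ j ∧ ∀ k, IsRedundant r τ k ↔ k = i ∨ k = j := by
  classical
  choose μ hμτ hμ using fun i => exists_min_image τ (r i) hτ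
  have eq_μ : ∀ {i s}, s ∈ τ → (∀ t ∈ τ, r i s ≤ r i t) → μ i = s := fun hs h =>
    hr _ ((hμ _ _ hs).antisymm (h _ (hμτ _)))
  have μ_surj : ∀ s ∈ τ, ∃ i, μ i = s := fun s hs => (hd s).imp fun _ h => eq_μ hs h
  obtain ⟨i, -, j, -, hij, hμij⟩ := exists_ne_map_eq_of_card_lt_of_maps_to
    (s := univ) (t := τ) (by rw [card_univ]; omega) (fun i _ => hμτ i)
  have redundant : ∀ {i j}, i ≠ j → μ i = μ j → IsRedundant r τ i := by
    rintro i j hij hμij s hs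
    obtain ⟨l, rfl⟩ := μ_surj s hs
    obtain rfl | hl := eq_or_ne l i
    · exact ⟨j, hij.symm, fun t ht => hμij ▸ hμ j t ht⟩
    · exact ⟨l, hl, hμ l⟩
  refine ⟨i, j, hij, fun k => ⟨fun hk => ?_, ?_⟩⟩
  · by_contra! hne
    have μ_injOn : Set.InjOn μ (univ.erase k : Finset N) := by
      refine injOn_of_surjOn_of_card_le (t := τ) μ (fun i _ => hμτ i) (fun s hs => ?_) ?_
      · obtain ⟨l, hl, hmin⟩ := hk s hs
        exact ⟨l, by simpa using hl, eq_μ hs hmin⟩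
      · rw [card_erase_of_mem (mem_univ k), card_univ]
        omega
    exact hij (μ_injOn (by simpa using hne.1.symm) (by simpa using hne.2.symm) hμij)
  · rintro (rfl | rfl)
    exacts [redundant hij hμij, redundant hij.symm hμij.symm]

open Classical in
lemma IsDominating.card_insert_eq_two [Fintype X] (hr : ∀ i, Function.Injective (r i))
    (hτ : τ.Nonempty) (hcard : #τ + 1 = Fintype.card N) (hd : IsDominating r τ)
    (hne : ∀ k, (upperRegion r τ k).Nonempty) :
    #{v | v ∉ τ ∧ IsDominating r (insert v τ)} = 2 := by
  obtain ⟨i, j, hij, hred⟩ := hd.exists_isRedundant_iff hr hτ hcard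
  choose z hz hzmax using fun k =>
    Set.exists_max_image (upperRegion r τ k) (r k) (Set.toFinite _) (hne k)
  have extends_z : ∀ k, IsRedundant r τ k → z k ∉ τ ∧ IsDominating r (insert (z k) τ) := fun k hk =>
    ⟨hk.notMem_of_mem_upperRegion (hz k), hd.insert_of_isMaxOn (hz k) (hzmax k)⟩
  refine card_eq_two.2 ⟨z i, z j, fun h => hij (hd.eq_of_mem_upperRegion (hz i) (h ▸ hz j)), ?_⟩
  ext v
  simp only [mem_filter, mem_univ, true_and, mem_insert, mem_singleton]
  refine ⟨fun ⟨hv, hdv⟩ => ?_, ?_⟩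
  · obtain ⟨k, hk, hvk, hvmax⟩ := hdv.exists_isRedundant_of_insert hr hcard hv
    obtain rfl : v = z k := hr k ((hzmax k v hvk).antisymm (hvmax (hz k)))
    exact ((hred k).1 hk).imp (congrArg z) (congrArg z)
  · rintro (rfl | rfl)
    exacts [extends_z i ((hred i).2 (.inl rfl)), extends_z j ((hred j).2 (.inr rfl))]

section Slack

variable {e : N → X}

lemma IsSlack.isDominating_image_erase [DecidableEq N] [DecidableEq X] (he : IsSlack r e) (k : N) :
    IsDominating r ((univ.erase k).image e) := by
  intro x
  by_cases hx : x ∈ Set.range e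
  · obtain ⟨i, rfl⟩ := hx
    exact ⟨i, fun s _ => he.le i s⟩
  · refine ⟨k, forall_mem_image.2 fun i hi => (he.lt i k x ?_ hx).le⟩
    exact (ne_of_mem_erase hi).symm

lemma IsSlack.upperRegion_image_erase [DecidableEq N] [DecidableEq X]
    (hr : ∀ i, Function.Injective (r i)) (he : IsSlack r e) (k : N) :
    upperRegion r ((univ.erase k).image e) k = {x | x ∉ (univ.erase k).image e} := by
  ext x
  simp only [upperRegion, Set.mem_ofPred_eq, mem_image, mem_erase, mem_univ, and_true, not_exists,
    not_and]
  refine ⟨?_, fun hx i hi => ⟨e i, ⟨i, hi, rfl⟩, (he.le i x).lt_of_ne ((hr i).ne (hx i hi))⟩⟩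
  rintro hx i hi rfl
  obtain ⟨_, ⟨j, -, rfl⟩, hlt⟩ := hx i hi
  exact (he.le i (e j)).not_gt hlt

open Classical in
lemma IsSlack.card_insert_eq_one [Fintype X] (hr : ∀ i, Function.Injective (r i))
    (he : IsSlack r e) (hinj : Function.Injective e) (k : N) :
    #{v | v ∉ (univ.erase k).image e ∧ IsDominating r (insert v ((univ.erase k).image e))} = 1 := by
  set τ := (univ.erase k).image e with hτ
  have mem_τ : ∀ i, i ≠ k → e i ∈ τ := fun i hi => mem_image_of_mem e (by simpa using hi)
  have hregion : upperRegion r τ k = {x | x ∉ τ} := he.upperRegion_image_erase hr k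
  obtain ⟨b, hb, hbmax⟩ := Set.exists_max_image {x | x ∉ τ} (r k) (Set.toFinite _)
    ⟨e k, by simp [hτ, hinj.eq_iff]⟩
  refine card_eq_one.2 ⟨b, ?_⟩
  ext v
  simp only [mem_filter, mem_univ, true_and, mem_singleton]
  refine ⟨fun ⟨hv, hd⟩ => ?_, ?_⟩
  · have hcard : #τ + 1 = Fintype.card N := by
      rw [card_image_of_injective _ hinj, card_erase_add_one (mem_univ k), card_univ]
    obtain ⟨l, -, hvl, hvmax⟩ := hd.exists_isRedundant_of_insert hr hcard hv
    obtain rfl | hl := eq_or_ne k l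
    · exact hr k ((hbmax v hv).antisymm (hvmax (hregion ▸ hb)))
    · obtain ⟨_, hs, hlt⟩ := hvl k hl
      obtain ⟨i, hi, rfl⟩ := mem_image.1 hs
      obtain ⟨j, rfl⟩ : v ∈ Set.range e := by
        by_contra hv'
        exact (he.lt i k v (mem_erase.1 hi).1.symm hv').not_gt hlt
      obtain rfl : j = k := by_contra fun hj => hv (mem_τ j hj)
      exact absurd hlt (he.le j (e i)).not_gt
  · rintro rfl
    exact ⟨hb, (he.isDominating_image_erase k).insert_of_isMaxOn (hregion ▸ hb) (hregion ▸ hbmax)⟩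

section Coloring

variable {c : X → N}

lemma even_card_filter_image_erase [DecidableEq N] [DecidableEq X] {i₀ : N}
    (hcard : #ρ = Fintype.card N) (hρ : ρ.image c ≠ univ) :
    Even #{x ∈ ρ | (ρ.erase x).image c = univ.erase i₀} := by
  obtain h | ⟨x, hx⟩ := (ρ.filter fun x => (ρ.erase x).image c = univ.erase i₀).eq_empty_or_nonempty
  · simp [h]
  obtain ⟨hxρ, hx⟩ := mem_filter.1 hx
  have hcx : c x ≠ i₀ := fun h => hρ <| by
    rw [← insert_erase hxρ, image_insert, hx, h, insert_erase (mem_univ _)]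
  obtain ⟨y, hy, hyx⟩ : ∃ y ∈ ρ.erase x, c y = c x := mem_image.1 (by simp [hx, hcx])
  have image_eq : (ρ.erase y).image c = (ρ.erase x).image c := by
    have hxy : x ∈ ρ.erase y := mem_erase.2 ⟨(ne_of_mem_erase hy).symm, hxρ⟩
    rw [← insert_erase hxy, ← insert_erase hy, erase_right_comm, image_insert, image_insert, hyx]
  suffices ρ.filter (fun x => (ρ.erase x).image c = univ.erase i₀) = {x, y} by
    rw [this, card_pair (ne_of_mem_erase hy).symm]
    exact even_two
  ext z
  simp only [mem_filter, mem_insert, mem_singleton]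
  refine ⟨fun ⟨hzρ, hz⟩ => ?_, ?_⟩
  · have c_injOn : Set.InjOn c (ρ.erase z) := by
      rw [← card_image_iff, hz, card_erase_of_mem hzρ, card_erase_of_mem (mem_univ _), hcard,
        card_univ]
    by_contra! hne
    exact ne_of_mem_erase hy (c_injOn (mem_erase.2 ⟨hne.2.symm, mem_of_mem_erase hy⟩)
      (mem_erase.2 ⟨hne.1.symm, hxρ⟩) hyx)
  · rintro (rfl | rfl)
    exacts [⟨hxρ, hx⟩, ⟨mem_of_mem_erase hy, image_eq.trans hx⟩]

lemma exists_mem_notMem_range [DecidableEq N] [DecidableEq X] {i₀ : N}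
    (hce : Function.LeftInverse c e) (hτ : τ.image c = univ.erase i₀)
    (hne : τ ≠ (univ.erase i₀).image e) : ∃ s ∈ τ, s ∉ Set.range e := by
  contrapose! hne
  have e_c : ∀ s ∈ τ, e (c s) = s := fun s hs => by
    obtain ⟨i, rfl⟩ := hne s hs
    rw [hce]
  rw [← hτ, image_image]
  exact (image_id.symm.trans (image_congr fun s hs => (e_c s hs).symm))

/-- A door of Scarf's parity argument: a dominating set whose elements carry each colour except
`i₀` exactly once. A room, that is a dominating set with as many elements as there are colours,
has an odd number of doors exactly when it carries all colours. -/
def IsDoor [DecidableEq N] (r : N → X → α) (c : X → N) (i₀ : N) (τ : Finset X) : Prop :=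
  #τ + 1 = Fintype.card N ∧ IsDominating r τ ∧ τ.image c = univ.erase i₀

section Fintype

variable [Fintype X]

lemma card_filter_covBy_left [DecidableEq X] (ρ : Finset X) (P : Finset X → Prop) [DecidablePred P]
    [DecidablePred (· ⋖ ρ)] : #{τ | τ ⋖ ρ ∧ P τ} = #{x ∈ ρ | P (ρ.erase x)} := by
  rw [← card_image_of_injOn ((erase_injOn ρ).mono (filter_subset _ ρ))]
  congr 1
  ext τ
  simp only [covBy_iff_exists_erase, mem_filter, mem_univ, true_and, mem_image]
  aesop

lemma card_filter_covBy_right [DecidableEq X] (τ : Finset X) (P : Finset X → Prop) [DecidablePred P]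
    [DecidablePred (τ ⋖ ·)] : #{ρ | τ ⋖ ρ ∧ P ρ} = #{x | x ∉ τ ∧ P (insert x τ)} := by
  rw [← card_image_of_injOn (f := (insert · τ)) fun x hx y _ h =>
    (insert_inj (mem_filter.1 hx).2.1).1 h]
  congr 1
  ext ρ
  simp only [covBy_iff_exists_insert, mem_filter, mem_univ, true_and, mem_image]
  aesop

open Classical in
lemma IsDominating.even_card_isDoor {i₀ : N} (hρ : IsDominating r ρ) (hcard : #ρ = Fintype.card N)
    (hc : ρ.image c ≠ univ) : Even #{τ | τ ⋖ ρ ∧ IsDoor r c i₀ τ} := by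
  have isDoor_iff : ∀ τ, τ ⋖ ρ ∧ IsDoor r c i₀ τ ↔ τ ⋖ ρ ∧ τ.image c = univ.erase i₀ := fun τ =>
    and_congr_right fun h => ⟨fun h' => h'.2.2, fun h' =>
      ⟨(Nat.covBy_iff_add_one_eq.1 h.card_finset).trans hcard, hρ.mono h.le, h'⟩⟩
  simp only [isDoor_iff]
  rw [card_filter_covBy_left]
  exact even_card_filter_image_erase hcard hc

open Classical in
lemma IsDoor.odd_card_iff {i₀ : N} (hr : ∀ i, Function.Injective (r i)) (he : IsSlack r e)
    (hce : Function.LeftInverse c e) (hτ : IsDoor r c i₀ τ) :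
    Odd #{ρ | τ ⋖ ρ ∧ #ρ = Fintype.card N ∧ IsDominating r ρ} ↔ τ = (univ.erase i₀).image e := by
  obtain ⟨hcard, hd, hc⟩ := hτ
  have room_iff : ∀ ρ, τ ⋖ ρ ∧ #ρ = Fintype.card N ∧ IsDominating r ρ ↔
      τ ⋖ ρ ∧ IsDominating r ρ := fun ρ =>
    and_congr_right fun h =>
      and_iff_right ((Nat.covBy_iff_add_one_eq.1 h.card_finset).symm.trans hcard)
  simp only [room_iff]
  rw [card_filter_covBy_right]
  by_cases hτ : τ = (univ.erase i₀).image e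
  · simp only [hτ, he.card_insert_eq_one hr hce.injective, odd_one]
  · obtain ⟨s, hs, hse⟩ := exists_mem_notMem_range hce hc hτ
    have upperRegion_nonempty : ∀ k, (upperRegion r τ k).Nonempty := fun k =>
      ⟨e k, fun i hi => ⟨s, hs, he.lt k i s hi hse⟩⟩
    simp [hτ, hd.card_insert_eq_two hr ⟨s, hs⟩ hcard upperRegion_nonempty]

end Fintype

open Classical in
theorem scarf [Finite X] [Nonempty N] (hr : ∀ i, Function.Injective (r i)) (he : IsSlack r e)
    (hce : Function.LeftInverse c e) : ∃ ρ, IsDominating r ρ ∧ ρ.image c = univ := by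
  cases nonempty_fintype X
  by_contra! hcon
  let i₀ := Classical.arbitrary N
  let τ₀ : Finset X := (univ.erase i₀).image e
  let rooms : Finset (Finset X) := {ρ | #ρ = Fintype.card N ∧ IsDominating r ρ}
  let doors : Finset (Finset X) := {τ | IsDoor r c i₀ τ}
  have τ₀_mem : τ₀ ∈ doors := (mem_filter_univ _).2 ⟨by
    rw [card_image_of_injective _ hce.injective, card_erase_add_one (mem_univ _), card_univ],
    he.isDominating_image_erase i₀, by rw [image_image, hce.comp_eq_id, image_id]⟩
  have even_above : Even (∑ ρ ∈ rooms, #(doors.bipartiteAbove (fun ρ τ => τ ⋖ ρ) ρ)) := by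
    refine even_sum _ fun ρ hρ => ?_
    obtain ⟨hcard, hd⟩ := (mem_filter_univ _).1 hρ
    rw [bipartiteAbove, filter_filter]
    simpa only [and_comm] using hd.even_card_isDoor (i₀ := i₀) hcard (hcon ρ hd)
  have odd_below : ∀ τ ∈ doors, Odd #(rooms.bipartiteBelow (fun ρ τ => τ ⋖ ρ) τ) ↔ τ = τ₀ := by
    intro τ hτ
    rw [bipartiteBelow, filter_filter]
    simpa only [and_comm] using ((mem_filter_univ _).1 hτ).odd_card_iff hr he hce
  rw [sum_card_bipartiteAbove_eq_sum_card_bipartiteBelow, ← Nat.not_odd_iff_even,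
    odd_sum_iff_odd_card_odd, filter_congr odd_below, filter_eq' doors τ₀,
    if_pos τ₀_mem] at even_above
  exact even_above (by simp)

end Coloring
end Slack
end Fintype
end Scarf

section KKM

lemma exists_colours_dominating {ι X β : Type*} [Finite ι] [Nonempty ι] [Finite X] [LinearOrder β]
    (f : ι → X → β) (l : X → ι) :
    ∃ (S : Finset X) (Z : Set ι), (∀ i ∉ Z, ∃ s ∈ S, l s = i) ∧
      ∀ x, ∃ i ∉ Z, ∀ s ∈ S, f i x ≤ f i s := by
  classical
  cases nonempty_fintype ι
  let height : ι → X ⊕ ι → WithBot (WithTop β) := fun i =>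
    Sum.elim (fun x => ((f i x : WithTop β) : WithBot (WithTop β))) fun k => if k = i then ⊥ else ⊤
  let rank : ι → X ⊕ ι → WithBot (WithTop β) ×ₗ Fin (Nat.card (X ⊕ ι)) := fun i x =>
    toLex (height i x, Finite.equivFin _ x)
  have rank_injective : ∀ i, Function.Injective (rank i) := fun i x y h =>
    (Finite.equivFin _).injective (congrArg (fun p => (ofLex p).2) h)
  have height_le : ∀ {i x y}, rank i x ≤ rank i y → height i x ≤ height i y := fun h =>
    Prod.Lex.monotone_fst _ _ h
  have isSlack : IsSlack rank Sum.inr := by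
    refine ⟨fun i x => ?_, fun i k x hki hx => ?_⟩
    · obtain rfl | hx := eq_or_ne x (Sum.inr i)
      · exact le_rfl
      · refine (Prod.Lex.toLex_lt_toLex.2 (Or.inl ?_)).le
        obtain x | k := x
        · simp [height]
        · have hki : k ≠ i := fun h => hx (congrArg Sum.inr h)
          simp [height, hki]
    · obtain x | j := x
      · refine Prod.Lex.toLex_lt_toLex.2 (Or.inl ?_)
        simpa [height, hki.symm] using WithBot.coe_lt_coe.2 (WithTop.coe_lt_top (f k x))
      · exact absurd ⟨j, rfl⟩ hx
  obtain ⟨ρ, hρ, hcol⟩ := scarf (c := Sum.elim l id) rank_injective isSlack fun _ => rfl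
  refine ⟨ρ.preimage Sum.inl Sum.inl_injective.injOn, {i | Sum.inr i ∈ ρ}, fun i hi => ?_,
    fun x => ?_⟩
  · obtain ⟨x | k, hxρ, hx⟩ := mem_image.1 (hcol ▸ mem_univ i)
    · exact ⟨x, mem_preimage.2 hxρ, hx⟩
    · exact absurd ((show k = i from hx) ▸ hxρ) hi
  · obtain ⟨i, hi⟩ := hρ (Sum.inl x)
    refine ⟨i, fun hiρ => ?_, fun s hs => ?_⟩
    · simpa [height] using height_le (hi _ hiρ)
    · simpa [height] using height_le (hi _ (mem_preimage.1 hs))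

variable {ι : Type*} [Fintype ι]

lemma le_add_of_mem_stdSimplex {s a : ι → ℝ} {ε : ℝ} (hs : s ∈ stdSimplex ℝ ι) (ha : a ≤ s)
    (hsum : 1 - ε ≤ ∑ i, a i) (i : ι) : s i ≤ a i + ε := by
  have h := single_le_sum (f := s - a) (fun k _ => sub_nonneg.2 (ha k)) (mem_univ i)
  simp only [Pi.sub_apply, sum_sub_distrib, hs.2] at h
  linarith

lemma exists_finset_net_stdSimplex {δ : ℝ} (hδ : 0 < δ) :
    ∃ F : Finset (ι → ℝ), ↑F ⊆ stdSimplex ℝ ι ∧ ∀ x ∈ stdSimplex ℝ ι, ∃ v ∈ F, dist x v < δ := by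
  obtain ⟨t, ht, hfin, hcov⟩ := (isCompact_stdSimplex ℝ ι).finite_cover_balls hδ
  refine ⟨hfin.toFinset, by simpa using ht, fun x hx => ?_⟩
  simpa using hcov hx

variable [Nonempty ι]

lemma exists_mem_stdSimplex_add_le {a : ι → ℝ} {ε : ℝ} (ha : 0 ≤ a) (hε : 0 ≤ ε)
    (hsum : ∑ i, a i ≤ 1 - ε) : ∃ x ∈ stdSimplex ℝ ι, ∀ i, a i + ε / Fintype.card ι ≤ x i := by
  have card_pos : (0 : ℝ) < Fintype.card ι := by exact_mod_cast Fintype.card_pos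
  have hδ : ε / Fintype.card ι ≤ (1 - ∑ i, a i) / Fintype.card ι := by gcongr; linarith
  refine ⟨fun i => a i + (1 - ∑ i, a i) / Fintype.card ι, ⟨fun i => ?_, ?_⟩, fun i => ?_⟩
  · exact add_nonneg (ha i) ((div_nonneg hε card_pos.le).trans hδ)
  · rw [sum_add_distrib, sum_const, card_univ, nsmul_eq_mul, mul_div_cancel₀ _ card_pos.ne']
    ring
  · exact add_le_add_right hδ _

lemma lt_sum_of_net {F : Finset (ι → ℝ)} {a : ι → ℝ} {ε : ℝ} (hε : 0 ≤ ε)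
    (hF : ∀ x ∈ stdSimplex ℝ ι, ∃ v ∈ F, dist x v < ε / Fintype.card ι) (ha : 0 ≤ a)
    (hFa : ∀ v ∈ F, ∃ i, v i ≤ a i) : 1 - ε < ∑ i, a i := by
  by_contra! hle
  obtain ⟨x, hx, hax⟩ := exists_mem_stdSimplex_add_le ha hε hle
  obtain ⟨v, hv, hxv⟩ := hF x hx
  obtain ⟨i, hvi⟩ := hFa v hv
  have : x i - v i < ε / Fintype.card ι :=
    (le_abs_self _).trans_lt ((dist_le_pi_dist x v i).trans_lt hxv)
  linarith [hax i]

lemma exists_approx_rainbow (l : (ι → ℝ) → ι) {ε : ℝ} (hε : 0 < ε) :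
    ∃ x ∈ stdSimplex ℝ ι, ∀ i, ∃ y ∈ stdSimplex ℝ ι, dist y x ≤ ε ∧ (l y = i ∨ y i ≤ ε) := by
  classical
  have card_pos : (0 : ℝ) < Fintype.card ι := by exact_mod_cast Fintype.card_pos
  obtain ⟨F, hFΔ, hF⟩ := exists_finset_net_stdSimplex (ι := ι) (div_pos hε card_pos)
  obtain ⟨S, Z, hcol, hdom⟩ := exists_colours_dominating (fun i (x : F) => x.1 i) fun x => l x.1
  obtain ⟨v, hv, -⟩ := hF _ (single_mem_stdSimplex ℝ (Classical.arbitrary ι))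
  obtain ⟨i₁, hi₁, -⟩ := hdom ⟨v, hv⟩
  obtain ⟨x, hxS, -⟩ := hcol i₁ hi₁
  let a : ι → ℝ := fun i => if i ∈ Z then 0 else S.inf' ⟨x, hxS⟩ fun s => s.1 i
  have a_le : ∀ s ∈ S, a ≤ s.1 := fun s hs i => by
    by_cases hi : i ∈ Z
    · simpa [a, hi] using (hFΔ s.2).1 i
    · simpa only [a, hi, if_false] using inf'_le _ hs
  have a_nonneg : 0 ≤ a := fun i => by
    by_cases hi : i ∈ Z
    · simp [a, hi]
    · simp only [a, hi, if_false]
      exact (le_inf'_iff _ _).2 fun s _ => (hFΔ s.2).1 i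
  have lt_sum : 1 - ε < ∑ i, a i := by
    refine lt_sum_of_net hε.le hF a_nonneg fun v hv => ?_
    obtain ⟨i, hi, hvi⟩ := hdom ⟨v, hv⟩
    refine ⟨i, ?_⟩
    simp only [a, hi, if_false]
    exact (le_inf'_iff _ _).2 hvi
  have le_add : ∀ s ∈ S, ∀ i, s.1 i ≤ a i + ε := fun s hs i =>
    le_add_of_mem_stdSimplex (hFΔ s.2) (a_le s hs) lt_sum.le i
  refine ⟨x.1, hFΔ x.2, fun i => ?_⟩
  by_cases hi : i ∈ Z
  · exact ⟨x.1, hFΔ x.2, by simpa using hε.le, Or.inr (by simpa [a, hi] using le_add x hxS i)⟩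
  · obtain ⟨s, hs, hsi⟩ := hcol i hi
    refine ⟨s.1, hFΔ s.2, (dist_pi_le_iff hε.le).2 fun k => abs_sub_le_iff.2 ⟨?_, ?_⟩, Or.inl hsi⟩
    · linarith [le_add s hs k, a_le x hxS k]
    · linarith [le_add x hxS k, a_le s hs k]

open Filter Topology in
theorem dual_kkm {D : ι → Set (ι → ℝ)} (hD : ∀ i, IsClosed (D i))
    (hcov : stdSimplex ℝ ι ⊆ ⋃ i, D i) (hface : ∀ i, ∀ x ∈ stdSimplex ℝ ι, x i = 0 → x ∈ D i) :
    ∃ x ∈ stdSimplex ℝ ι, ∀ i, x ∈ D i := by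
  choose! l hl using fun x (hx : x ∈ stdSimplex ℝ ι) => Set.mem_iUnion.1 (hcov hx)
  choose x hx y hy hyx hly using fun K : ℕ =>
    exists_approx_rainbow l (Nat.one_div_pos_of_nat (α := ℝ) (n := K))
  obtain ⟨a, ha, φ, hφ, hlim⟩ := (isCompact_stdSimplex ℝ ι).tendsto_subseq hx
  have one_div_tendsto : Tendsto (fun K : ℕ => 1 / ((φ K : ℝ) + 1)) atTop (𝓝 0) :=
    tendsto_one_div_add_atTop_nhds_zero_nat.comp hφ.tendsto_atTop
  refine ⟨a, ha, fun i => ?_⟩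
  have y_tendsto : Tendsto (fun K => y (φ K) i) atTop (𝓝 a) :=
    hlim.congr_dist (squeeze_zero (fun _ => dist_nonneg)
      (fun K => (dist_comm _ _).trans_le (hyx (φ K) i)) one_div_tendsto)
  by_contra haD
  have eventually_le : ∀ᶠ K in atTop, y (φ K) i i ≤ 1 / ((φ K : ℝ) + 1) := by
    filter_upwards [y_tendsto.eventually ((hD i).isOpen_compl.mem_nhds haD)] with K hK
    exact (hly (φ K) i).resolve_left fun h => hK (by simpa only [h] using hl _ (hy (φ K) i))
  have a_le : a i ≤ 0 := le_of_tendsto_of_tendsto (((continuous_apply i).tendsto a).comp y_tendsto)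
    one_div_tendsto eventually_le
  exact haD (hface i a ha (a_le.antisymm (ha.1 i)))

theorem kkm {C : ι → Set (ι → ℝ)} (hC : ∀ i, IsClosed (C i))
    (hcov : ∀ x ∈ stdSimplex ℝ ι, ∃ i, 0 < x i ∧ x ∈ C i) :
    ∃ x ∈ stdSimplex ℝ ι, ∀ i, x ∈ C i := by
  classical
  have C_nonempty : ∀ i, (C i).Nonempty := fun i => by
    obtain ⟨k, hk, hkC⟩ := hcov _ (single_mem_stdSimplex ℝ i)
    obtain rfl : k = i := by_contra fun h => by simp [Pi.single_eq_of_ne h] at hk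
    exact ⟨_, hkC⟩
  let d : ι → (ι → ℝ) → ℝ := fun i x => Metric.infDist x (C i)
  have d_nonneg : ∀ i x, 0 ≤ d i x := fun i x => Metric.infDist_nonneg
  have d_cont : ∀ i, Continuous (d i) := fun i => Metric.continuous_infDist_pt _
  have sum_mul : ∀ x ∈ stdSimplex ℝ ι, ∑ i, x i * ∑ k, d k x = ∑ i, d i x := fun x hx => by
    rw [← Finset.sum_mul, hx.2, one_mul]
  obtain ⟨x, hx, hxd⟩ := dual_kkm (D := fun i => {x | x i * ∑ k, d k x ≤ d i x})
    (fun i => isClosed_le (by fun_prop) (d_cont i))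
    (fun x hx => Set.mem_iUnion.2 <| by
      obtain ⟨i, -, hi⟩ := exists_le_of_sum_le univ_nonempty (sum_mul x hx).le
      exact ⟨i, hi⟩)
    fun i x _ hi => by simpa [hi] using d_nonneg i x
  have eq_d : ∀ i, x i * ∑ k, d k x = d i x := fun i =>
    (sum_eq_sum_iff_of_le fun i _ => hxd i).1 (sum_mul x hx) i (mem_univ i)
  obtain ⟨i, hi, hiC⟩ := hcov x hx
  have sum_eq_zero : ∑ k, d k x = 0 :=
    (mul_eq_zero.1 ((eq_d i).trans (Metric.infDist_zero_of_mem hiC))).resolve_left hi.ne'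
  refine ⟨x, hx, fun k => ((hC k).mem_iff_infDist_zero (C_nonempty k)).2 ?_⟩
  exact (sum_eq_zero_iff_of_nonneg fun i _ => d_nonneg i x).1 sum_eq_zero k (mem_univ k)

end KKM

section Rounding

variable {N J : Type*} {D : N → Set J}

/-- No simple cycle in the bipartite graph joining each agent `i` to the items of `D i`; a cycle
of length `2 * (k + 2)` is given by its items and agents, indexed cyclically by `Fin (k + 2)`. -/
def IsForest (D : N → Set J) : Prop :=
  ∀ (k : ℕ) (js : Fin (k + 2) → J) (ags : Fin (k + 2) → N), Function.Injective js →
    Function.Injective ags → ¬ ∀ l, js l ∈ D (ags l) ∧ js (l + 1) ∈ D (ags l)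

/-- The items of `D i` which also belong to `D k` for some other agent `k` in `U`. -/
def sharedItems (D : N → Set J) (U : Finset N) (i : N) : Set J :=
  {q ∈ D i | ∃ k ∈ U, k ≠ i ∧ q ∈ D k}

lemma exists_minimal_repetition [Finite N] {A : ℕ → N} {Q : ℕ → J} (hA : ∀ t, A (t + 1) ≠ A t)
    (hQ : ∀ t, Q (t + 1) ≠ Q t) :
    ∃ s k, (A s = A (s + (k + 2)) ∨ Q s = Q (s + (k + 2))) ∧
      ∀ t, (Function.Injective fun l : Fin (k + 2) => A (t + l)) ∧
        Function.Injective fun l : Fin (k + 2) => Q (t + l) := by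
  classical
  have repetition : ∃ d, 0 < d ∧ ∃ s, A s = A (s + d) ∨ Q s = Q (s + d) := by
    obtain ⟨s, t, hst, h⟩ := Finite.exists_ne_map_eq_of_infinite A
    wlog hlt : s < t generalizing s t
    · exact this t s hst.symm h.symm (hst.lt_or_gt.resolve_left hlt)
    exact ⟨t - s, Nat.sub_pos_of_lt hlt, s, Or.inl (by rwa [Nat.add_sub_of_le hlt.le])⟩
  obtain ⟨hpos, s, hs⟩ := Nat.find_spec repetition
  obtain ⟨k, hk⟩ : ∃ k, Nat.find repetition = k + 2 := by
    refine Nat.exists_eq_add_of_le' (Nat.lt_of_le_of_ne hpos fun h => ?_)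
    rw [← h] at hs
    exact hs.elim (hA s ·.symm) (hQ s ·.symm)
  have ne_of_lt : ∀ t (l l' : Fin (k + 2)), l < l' → A (t + l) ≠ A (t + l') ∧
      Q (t + l) ≠ Q (t + l') := by
    intro t l l' hlt
    have h := Nat.find_min repetition (m := l' - l) (by omega)
    push Not at h
    simpa only [Nat.add_assoc, Nat.add_sub_of_le (Fin.le_def.1 hlt.le)] using h (by omega) (t + l)
  exact ⟨s, k, hk ▸ hs, fun t => ⟨.of_lt_imp_ne fun l l' h => (ne_of_lt t l l' h).1,
    .of_lt_imp_ne fun l l' h => (ne_of_lt t l l' h).2⟩⟩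

lemma IsForest.not_walk [Finite N] (hD : IsForest D) {A : ℕ → N} {Q : ℕ → J}
    (hA : ∀ t, A (t + 1) ≠ A t) (hQ : ∀ t, Q (t + 1) ≠ Q t) :
    ¬ ∀ t, Q t ∈ D (A t) ∧ Q (t + 1) ∈ D (A t) := by
  intro hwalk
  obtain ⟨s, k, hs, hinj⟩ := exists_minimal_repetition hA hQ
  have not_closed : ∀ t, Q t ∉ D (A (t + (k + 1))) := by
    refine fun t hclosed => hD k _ _ (hinj t).2 (hinj t).1 fun l => ⟨(hwalk _).1, ?_⟩
    obtain rfl | hl := eq_or_ne l (Fin.last (k + 1))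
    · simpa using hclosed
    · simpa only [Fin.val_add_one, if_neg hl, Nat.add_assoc] using (hwalk (t + l)).2
  obtain h | h := hs
  · refine not_closed (s + 1) ?_
    rw [show s + 1 + (k + 1) = s + (k + 2) by omega, ← h]
    exact (hwalk s).2
  · exact not_closed s (h ▸ (hwalk (s + (k + 1))).2)

lemma IsForest.exists_subsingleton_sharedItems [Finite N] (hD : IsForest D) {U : Finset N}
    (hU : U.Nonempty) : ∃ i ∈ U, (sharedItems D U i).Subsingleton := by
  by_contra! hcon
  let Edge := {s : N × J // s.1 ∈ U ∧ s.2 ∈ D s.1}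
  have next : ∀ s : Edge, ∃ t : Edge, t.1.1 ≠ s.1.1 ∧ t.1.2 ≠ s.1.2 ∧ t.1.2 ∈ D s.1.1 := by
    rintro ⟨⟨i, j⟩, hi, -⟩
    obtain ⟨q, ⟨hq, k, hk, hki, hqk⟩, hqj⟩ := (hcon i hi).exists_ne j
    exact ⟨⟨⟨k, q⟩, hk, hqk⟩, hki, hqj, hq⟩
  choose next next_agent next_item next_mem using next
  obtain ⟨i₀, hi₀⟩ := hU
  obtain ⟨q₀, hq₀, -⟩ := (hcon i₀ hi₀).nonempty
  let walk : ℕ → Edge := fun t => next^[t] ⟨(i₀, q₀), hi₀, hq₀⟩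
  have walk_succ : ∀ t, walk (t + 1) = next (walk t) := fun t => Function.iterate_succ_apply' _ _ _
  refine hD.not_walk (A := fun t => (walk t).1.1) (Q := fun t => (walk t).1.2)
    (fun t => ?_) (fun t => ?_) fun t => ⟨(walk t).2.2, ?_⟩ <;> simp only [walk_succ]
  exacts [next_agent _, next_item _, next_mem _]

variable {p : J → ℝ} {T : ℝ}

/-- The bundle `B` is worth at least `T` at the prices `p` after at most one item of `D` is
added to it or removed from it. -/
def ReachesUpToOne [DecidableEq J] (p : J → ℝ) (D : Set J) (T : ℝ) (B : Finset J) : Prop :=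
  ∃ S : Finset J, #S ≤ 1 ∧ ↑S ⊆ D ∧ T ≤ bval p (symmDiff B S)

lemma reachesUpToOne_of_le [DecidableEq J] {B : Finset J} {D : Set J} (h : T ≤ bval p B) :
    ReachesUpToOne p D T B :=
  ⟨∅, by simp, by simp, by rwa [← bot_eq_empty, symmDiff_bot]⟩

variable [Fintype J] [DecidableEq N] {a a' b : J → N} {i k : N}

/-- The items which the assignment `a` of items to agents gives to agent `i`. -/
def bundle (a : J → N) (i : N) : Finset J := {j | a j = i}

@[simp]
lemma mem_bundle {j : J} : j ∈ bundle a i ↔ a j = i := by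
  simp [bundle]

lemma bval_bundle (p : J → ℝ) (a : J → N) (i : N) :
    bval p (bundle a i) = ∑ j, if a j = i then p j else 0 :=
  sum_filter _ _

lemma bundle_congr (ha : ∀ j, j ∈ D (a j)) (ha' : ∀ j, j ∈ D (a' j))
    (h : ∀ j ∈ D k, a j = a' j) : bundle a k = bundle a' k := by
  ext j
  rw [mem_bundle, mem_bundle]
  exact ⟨fun hj => h j (hj ▸ ha j) ▸ hj, fun hj => (h j (hj ▸ ha' j)).trans hj⟩

lemma bval_bundle_le_add {j₀ : J} {x : ℝ} (hi : a j₀ ≠ i) (hx : 0 ≤ x)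
    (hle : ∀ j, a j = i → p j ≤ x) (hge : ∀ j, -x ≤ p j) :
    bval p (bundle a i) + p j₀ ≤ bval p (bundle a (a j₀)) + (Fintype.card J - 1) * x := by
  classical
  have sum_le : ∑ j ∈ univ.erase j₀, ((if a j = i then p j else 0) -
      if a j = a j₀ then p j else 0) ≤ (Fintype.card J - 1) * x := by
    refine (sum_le_card_nsmul _ _ x fun j _ => ?_).trans_eq ?_
    · have := hle j
      have := hge j
      grind
    · rw [card_erase_of_mem (mem_univ _), card_univ, nsmul_eq_mul,
        Nat.cast_pred (Fintype.card_pos_iff.2 ⟨j₀⟩)]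
  rw [sum_sub_distrib] at sum_le
  rw [bval_bundle, bval_bundle, ← add_sum_erase _ _ (mem_univ j₀),
    ← add_sum_erase _ (fun j => if a j = a j₀ then p j else 0) (mem_univ j₀), if_neg hi, if_pos rfl]
  linarith

/-- The assignment `a` gives each item to an agent whose set `D` contains it, and no agent
more than `T` at the prices `p`. -/
structure IsFeasible (p : J → ℝ) (D : N → Set J) (T : ℝ) (a : J → N) : Prop where
  mem : ∀ j, j ∈ D (a j)
  le : ∀ i, bval p (bundle a i) ≤ T

variable [DecidableEq J]

lemma bval_bundle_update (p : J → ℝ) (a : J → N) (j : J) (k i : N) :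
    bval p (bundle (Function.update a j k) i) =
      bval p (bundle a i) - (if a j = i then p j else 0) + if k = i then p j else 0 := by
  simp only [bval_bundle, Fintype.sum_eq_add_sum_compl j]
  rw [Function.update_self, sum_congr rfl fun x hx => by
    rw [Function.update_of_ne (by simpa using hx)]]
  ring

lemma reachesUpToOne_of_le_update {D : Set J} {q : J} (hq : q ∈ D)
    (h : T ≤ bval p (bundle (Function.update a q k) i)) : ReachesUpToOne p D T (bundle a i) := by
  have subset_singleton :
      symmDiff (bundle a i) (bundle (Function.update a q k) i) ⊆ {q} := fun j => by
    by_cases hj : j = q <;> simp [mem_symmDiff, hj]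
  refine ⟨_, (card_le_card subset_singleton).trans (card_singleton q).le, fun j hj => ?_,
    by rwa [symmDiff_symmDiff_cancel_left]⟩
  rwa [mem_singleton.1 (subset_singleton hj)]

lemma IsFeasible.update {j : J} (ha : IsFeasible p D T a)
    (hi : ¬ ReachesUpToOne p (D i) T (bundle a i)) (hj : j ∈ D i) (hk : j ∈ D k)
    (hlt : (if a j = i then p j else 0) < if k = i then p j else 0) :
    IsFeasible p D T (Function.update a j k) := by
  refine ⟨fun j' => ?_, fun l => ?_⟩
  · obtain rfl | hj' := eq_or_ne j' j
    · rwa [Function.update_self]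
    · simpa only [Function.update_of_ne hj'] using ha.mem j'
  · obtain rfl | hl := eq_or_ne l i
    · exact (not_le.1 fun h => hi (reachesUpToOne_of_le_update hj h)).le
    · have := ha.le l
      rw [bval_bundle_update]
      grind

lemma IsFeasible.bval_bundle_le_of_isMaxOn {P : Set J} (ha : IsFeasible p D T a) (hP : P ⊆ D i)
    (hmax : ∀ a', IsFeasible p D T a' → (∀ j ∉ P, a' j = a j) →
      bval p (bundle a' i) ≤ bval p (bundle a i))
    (hi : ¬ ReachesUpToOne p (D i) T (bundle a i)) {j : J} (hj : j ∈ P) (hk : j ∈ D k) :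
    (if k = i then p j else 0) ≤ if a j = i then p j else 0 := by
  by_contra! hlt
  have h := hmax _ (ha.update hi (hP hj) hk hlt) fun j' hj' =>
    Function.update_of_ne (ne_of_mem_of_not_mem hj hj').symm _ _
  rw [bval_bundle_update] at h
  linarith

lemma IsFeasible.reachesUpToOne_of_isMaxOn {Q : Set J} (ha : IsFeasible p D T a)
    (hQ : Q.Subsingleton) (hQD : Q ⊆ D i)
    (hmax : ∀ a', IsFeasible p D T a' → (∀ j ∉ D i \ Q, a' j = a j) →
      bval p (bundle a' i) ≤ bval p (bundle a i))
    (hb : ∀ j, j ∈ D (b j)) (hbT : T ≤ bval p (bundle b i)) :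
    ReachesUpToOne p (D i) T (bundle a i) := by
  by_contra hi
  have term_le : ∀ j ∉ Q, (if b j = i then p j else 0) ≤ if a j = i then p j else 0 := by
    intro j hjQ
    by_cases hj : j ∈ D i
    · exact ha.bval_bundle_le_of_isMaxOn Set.sdiff_subset hmax hi ⟨hj, hjQ⟩ (hb j)
    · rw [if_neg (by rintro rfl; exact hj (hb j)), if_neg (by rintro rfl; exact hj (ha.mem j))]
  obtain rfl | ⟨q, hq⟩ := Q.eq_empty_or_nonempty
  · refine hi (reachesUpToOne_of_le (hbT.trans ?_))
    rw [bval_bundle, bval_bundle]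
    exact sum_le_sum fun j _ => term_le j (Set.notMem_empty j)
  · refine hi (reachesUpToOne_of_le_update (k := b q) (hQD hq) (hbT.trans ?_))
    rw [bval_bundle, bval_bundle]
    refine sum_le_sum fun j _ => ?_
    obtain rfl | hj := eq_or_ne j q
    · rw [Function.update_self]
    · rw [Function.update_of_ne hj]
      exact term_le j fun hjQ => hj (hQ hjQ hq)

lemma IsFeasible.exists_reachesUpToOne [Finite N] (ha : IsFeasible p D T a) (hD : IsForest D)
    (hT : ∀ i, ∃ b : J → N, (∀ j, j ∈ D (b j)) ∧ T ≤ bval p (bundle b i)) (U : Finset N) :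
    ∃ b, IsFeasible p D T b ∧ ∀ i ∈ U, ReachesUpToOne p (D i) T (bundle b i) := by
  induction U using Finset.strongInduction with
  | H U ih =>
    obtain rfl | hU := U.eq_empty_or_nonempty
    · exact ⟨a, ha, by simp⟩
    obtain ⟨i, hiU, hi⟩ := hD.exists_subsingleton_sharedItems hU
    obtain ⟨a₁, ha₁, hreach⟩ := ih (U.erase i) (erase_ssubset hiU)
    obtain ⟨a₂, ⟨ha₂, hagree⟩, hmax⟩ := Set.exists_max_image
      {a' | IsFeasible p D T a' ∧ ∀ j ∉ D i \ sharedItems D U i, a' j = a₁ j}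
      (fun a' => bval p (bundle a' i)) (Set.toFinite _) ⟨a₁, ha₁, fun _ _ => rfl⟩
    refine ⟨a₂, ha₂, fun k hk => ?_⟩
    obtain rfl | hki := eq_or_ne k i
    · obtain ⟨b, hb, hbT⟩ := hT k
      refine ha₂.reachesUpToOne_of_isMaxOn hi (fun _ h => h.1) (fun a' ha' h => ?_) hb hbT
      exact hmax a' ⟨ha', fun j hj => (h j hj).trans (hagree j hj)⟩
    · rw [bundle_congr ha₂.mem ha₁.mem fun j hj =>
        hagree j fun hj' => hj'.2 ⟨hj'.1, k, hk, hki, hj⟩]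
      exact hreach k (mem_erase.2 ⟨hki, hk⟩)

end Rounding

section Prices

variable {N J : Type*}

/-- No product of ratios of nonzero values along a simple cycle of agents and items equals `1`,
the encoding of cycles being that of `IsForest`. -/
def Nondegenerate (u : N → J → ℝ) : Prop :=
  ∀ (k : ℕ) (js : Fin (k + 2) → J) (ags : Fin (k + 2) → N), Function.Injective js →
    Function.Injective ags → (∀ l, u (ags l) (js l) ≠ 0 ∧ u (ags l) (js (l + 1)) ≠ 0) →
    ∏ l, u (ags l) (js l) / u (ags l) (js (l + 1)) ≠ 1

variable [Fintype N] [Nonempty N] {W : N → ℝ} {u : N → J → ℝ} {i : N} {j : J}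

/-- The price of an item under the weights `W`: its largest weighted value. -/
def price (W : N → ℝ) (u : N → J → ℝ) (j : J) : ℝ :=
  univ.sup' univ_nonempty fun k => W k * u k j

/-- The items which agent `i` values, weighted by `W i`, at their price; an allocation maximizes
the weighted welfare if each agent gets only items of this set. -/
def demand (W : N → ℝ) (u : N → J → ℝ) (i : N) : Set J :=
  {j | W i * u i j = price W u j}

lemma mul_le_price (W : N → ℝ) (u : N → J → ℝ) (i : N) (j : J) : W i * u i j ≤ price W u j :=
  le_sup' (fun k => W k * u k j) (mem_univ i)

lemma exists_mem_demand (W : N → ℝ) (u : N → J → ℝ) (j : J) : ∃ i, j ∈ demand W u i := by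
  obtain ⟨i, -, hi⟩ := exists_mem_eq_sup' univ_nonempty fun k => W k * u k j
  exact ⟨i, hi.symm⟩

lemma continuous_price (u : N → J → ℝ) (j : J) : Continuous fun W => price W u j :=
  Continuous.finset_sup'_apply univ_nonempty fun k _ => by fun_prop

lemma price_ne_zero (hW : ∀ i, 0 < W i) (h : (∃ i, 0 < u i j) ∨ ∀ i, u i j < 0) :
    price W u j ≠ 0 := by
  obtain ⟨i, hi⟩ | h := h
  · exact ((mul_pos (hW i) hi).trans_le (mul_le_price W u i j)).ne'
  · obtain ⟨i, hi⟩ := exists_mem_demand W u j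
    exact hi ▸ (mul_neg_of_pos_of_neg (hW i) (h i)).ne

lemma Nondegenerate.isForest_demand (hu : Nondegenerate u) (hp : ∀ j, price W u j ≠ 0) :
    IsForest (demand W u) := by
  intro k js ags hjs hags hcycle
  have ne_zero : ∀ {i j}, j ∈ demand W u i → W i ≠ 0 ∧ u i j ≠ 0 := fun h =>
    mul_ne_zero_iff.1 (h.trans_ne (hp _))
  refine hu k js ags hjs hags (fun l => ⟨(ne_zero (hcycle l).1).2, (ne_zero (hcycle l).2).2⟩) ?_
  calc ∏ l, u (ags l) (js l) / u (ags l) (js (l + 1))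
      = ∏ l, price W u (js l) / price W u (js (l + 1)) := prod_congr rfl fun l _ => by
        rw [← (hcycle l).1, ← (hcycle l).2, mul_div_mul_left _ _ (ne_zero (hcycle l).1).1]
    _ = (∏ l, price W u (js l)) / ∏ l, price W u (js l) := by
        rw [prod_div_distrib]
        congr 1
        exact Equiv.prod_comp (Equiv.addRight (1 : Fin (k + 2))) fun l => price W u (js l)
    _ = 1 := div_self (prod_ne_zero_iff.2 fun l _ => hp _)

lemma mul_bval_le_bval_price (W : N → ℝ) (u : N → J → ℝ) (i : N) (S : Finset J) :
    W i * bval (u i) S ≤ bval (price W u) S := by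
  rw [bval, mul_sum]
  exact sum_le_sum fun j _ => mul_le_price W u i j

lemma mul_bval_eq_bval_price {S : Finset J} (hS : ↑S ⊆ demand W u i) :
    W i * bval (u i) S = bval (price W u) S := by
  rw [bval, mul_sum]
  exact sum_congr rfl fun j hj => hS hj

end Prices

section TopSpender

variable {N J : Type*} [Fintype N] [Nonempty N] [DecidableEq N] [Fintype J]
  {W : N → ℝ} {u : N → J → ℝ} {i : N}

/-- Some allocation maximizing the `W`-weighted welfare gives agent `i` a bundle of the largest
price. The sets of weights `W` with this property are those to which the KKM theorem is
applied. -/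
def IsTopSpender (W : N → ℝ) (u : N → J → ℝ) (i : N) : Prop :=
  ∃ a : J → N, (∀ j, j ∈ demand W u (a j)) ∧
    ∀ k, bval (price W u) (bundle a k) ≤ bval (price W u) (bundle a i)

lemma isClosed_setOf_isTopSpender (u : N → J → ℝ) (i : N) : IsClosed {W | IsTopSpender W u i} := by
  have continuous_bval : ∀ S : Finset J, Continuous fun W => bval (price W u) S := fun S =>
    continuous_finsetSum S fun j _ => continuous_price u j
  simp only [IsTopSpender, Set.ofPred_exists, Set.ofPred_and, Set.ofPred_forall]
  refine isClosed_iUnion_of_finite fun a => .inter (isClosed_iInter fun j => ?_) <|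
    isClosed_iInter fun k => isClosed_le (continuous_bval _) (continuous_bval _)
  exact isClosed_eq (by fun_prop) (continuous_price u j)

lemma lt_weight_of_isTopSpender {j₀ : J} {c V η : ℝ} (hc : 0 < c)
    (hj₀ : ∀ i, u i j₀ = c) (hV : ∀ i j, |u i j| ≤ V) (hη : 0 < η)
    (hηc : Fintype.card N * ((Fintype.card J - 1) * (η * V)) ≤ c)
    (hW : ∀ i, η ≤ W i) (hsum : ∑ i, W i = 1 + Fintype.card N * η) (hi : IsTopSpender W u i) :
    η < W i := by
  obtain ⟨a, ha, hmax⟩ := hi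
  by_contra hnlt
  have W_eq : W i = η := (not_lt.1 hnlt).antisymm (hW i)
  have price_j₀ : price W u j₀ = W (a j₀) * c := by rw [← ha j₀, hj₀]
  have le_W : ∀ k, W k ≤ W (a j₀) := fun k =>
    le_of_mul_le_mul_right (price_j₀ ▸ hj₀ k ▸ mul_le_price W u k j₀) hc
  have one_le : 1 + Fintype.card N * η ≤ Fintype.card N * W (a j₀) := by
    rw [← hsum, ← nsmul_eq_mul, ← card_univ]
    exact sum_le_card_nsmul _ _ _ fun k _ => le_W k
  have card_pos : (0 : ℝ) < Fintype.card N := by exact_mod_cast Fintype.card_pos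
  have lt_W : η < W (a j₀) := lt_of_mul_lt_mul_left (by linarith) card_pos.le
  have abs_le_mul : ∀ j, |η * u i j| ≤ η * V := fun j => by
    rw [abs_mul, abs_of_pos hη]
    exact mul_le_mul_of_nonneg_left (hV i j) hη.le
  have spend_le : bval (price W u) (bundle a i) + price W u j₀ ≤
      bval (price W u) (bundle a (a j₀)) + (Fintype.card J - 1) * (η * V) := by
    refine bval_bundle_le_add (fun h => lt_W.ne' (h ▸ W_eq))
      ((abs_nonneg _).trans (abs_le_mul j₀)) (fun j hj => ?_) fun j => ?_
    · rw [← show W i * u i j = price W u j from hj ▸ ha j, W_eq]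
      exact (abs_le.1 (abs_le_mul j)).2
    · exact (neg_le_of_abs_le (abs_le_mul j)).trans (W_eq ▸ mul_le_price W u i j)
  have price_le : price W u j₀ ≤ (Fintype.card J - 1) * (η * V) := by linarith [hmax (a j₀)]
  have lt_mul_price : c < Fintype.card N * price W u j₀ :=
    calc c < (1 + Fintype.card N * η) * c := lt_mul_left hc (by simp [card_pos, hη])
      _ ≤ Fintype.card N * W (a j₀) * c := mul_le_mul_of_nonneg_right one_le hc.le
      _ = Fintype.card N * price W u j₀ := by rw [price_j₀, mul_assoc]
  exact (lt_mul_price.trans_le (mul_le_mul_of_nonneg_left price_le card_pos.le)).not_ge hηc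

lemma exists_weights_forall_isTopSpender {j₀ : J} {c V η : ℝ} (hc : 0 < c)
    (hj₀ : ∀ i, u i j₀ = c) (hV : ∀ i j, |u i j| ≤ V) (hη : 0 < η)
    (hηc : Fintype.card N * ((Fintype.card J - 1) * (η * V)) ≤ c) :
    ∃ w ∈ stdSimplex ℝ N, ∀ i, IsTopSpender (fun k => w k + η) u i := by
  classical
  refine kkm (C := fun i => {w | IsTopSpender (fun k => w k + η) u i}) (fun i => ?_) fun w hw => ?_
  · exact (isClosed_setOf_isTopSpender u i).preimage
      (f := fun (w : N → ℝ) k => w k + η) (by fun_prop)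
  · choose a ha using exists_mem_demand (fun k => w k + η) u
    obtain ⟨i, -, hi⟩ := exists_max_image univ
      (fun k => bval (price (fun k => w k + η) u) (bundle a k)) univ_nonempty
    have isTopSpender : IsTopSpender (fun k => w k + η) u i := ⟨a, ha, fun k => hi k (mem_univ k)⟩
    have sum_eq : ∑ k, (w k + η) = 1 + Fintype.card N * η := by
      rw [sum_add_distrib, hw.2, sum_const, card_univ, nsmul_eq_mul]
    have lt_weight : η < w i + η := lt_weight_of_isTopSpender (W := fun k => w k + η) hc hj₀ hV hη
      hηc (fun k => le_add_of_nonneg_left (hw.1 k)) sum_eq isTopSpender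
    exact ⟨i, pos_of_lt_add_left lt_weight, isTopSpender⟩

lemma exists_isFeasible_forall_reachesUpToOne [DecidableEq J] (hD : IsForest (demand W u))
    (hW : ∀ i, IsTopSpender W u i) :
    ∃ T b, IsFeasible (price W u) (demand W u) T b ∧
      ∀ i, ReachesUpToOne (price W u) (demand W u i) T (bundle b i) := by
  choose a ha hmax using hW
  obtain ⟨i₀, -, hi₀⟩ := exists_min_image univ
    (fun i => bval (price W u) (bundle (a i) i)) univ_nonempty
  have isFeasible : IsFeasible (price W u) (demand W u)
      (bval (price W u) (bundle (a i₀) i₀)) (a i₀) := ⟨ha i₀, hmax i₀⟩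
  obtain ⟨b, hb, hreach⟩ := isFeasible.exists_reachesUpToOne hD
    (fun i => ⟨a i, ha i, hi₀ i (mem_univ i)⟩) univ
  exact ⟨_, b, hb, fun i => hreach i (mem_univ i)⟩

end TopSpender

section Allocations

variable {n : ℕ} {J : Type*} [Fintype J] {W : Fin n → ℝ} {u : Fin n → J → ℝ}

lemma isAlloc_bundle (a : J → Fin n) : IsAlloc (bundle a) := fun j =>
  ⟨a j, mem_bundle.2 rfl, fun _ hi => (mem_bundle.1 hi).symm⟩

lemma IsAlloc.sum_bval {B : Fin n → Finset J} (hB : IsAlloc B) (p : J → ℝ) :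
    ∑ i, bval p (B i) = ∑ j, p j := by
  choose b hb hb_unique using hB
  have B_eq : ∀ i, B i = bundle b i := fun i => by
    ext j
    rw [mem_bundle]
    exact ⟨fun h => (hb_unique j i h).symm, fun h => h ▸ hb j⟩
  simp only [B_eq]
  exact sum_fiberwise univ b p

variable [NeZero n]

lemma welfare_le_of_forall_mem_demand {a : J → Fin n} (ha : ∀ j, j ∈ demand W u (a j))
    {B : Fin n → Finset J} (hB : IsAlloc B) :
    ∑ i, W i * bval (u i) (B i) ≤ ∑ i, W i * bval (u i) (bundle a i) :=
  calc ∑ i, W i * bval (u i) (B i)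
      ≤ ∑ i, bval (price W u) (B i) := sum_le_sum fun i _ => mul_bval_le_bval_price W u i (B i)
    _ = ∑ i, bval (price W u) (bundle a i) := by
        rw [hB.sum_bval, (isAlloc_bundle a).sum_bval]
    _ = ∑ i, W i * bval (u i) (bundle a i) := sum_congr rfl fun i _ =>
        (mul_bval_eq_bval_price fun j hj => mem_bundle.1 (mem_coe.1 hj) ▸ ha j).symm

lemma IsFeasible.ief1_bundle [DecidableEq J] {T : ℝ} {b : J → Fin n} (hW : ∀ i, 0 < W i)
    (hb : IsFeasible (price W u) (demand W u) T b)
    (hreach : ∀ i, ReachesUpToOne (price W u) (demand W u i) T (bundle b i)) :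
    IEF1 u (bundle b) := by
  intro i
  obtain ⟨S, hS, hSD, hTS⟩ := hreach i
  have symmDiff_subset : ↑(symmDiff (bundle b i) S) ⊆ demand W u i := fun j hj => by
    obtain ⟨hj, -⟩ | ⟨hj, -⟩ := mem_symmDiff.1 (mem_coe.1 hj)
    exacts [mem_bundle.1 hj ▸ hb.mem j, hSD hj]
  refine ⟨S, hS, fun k => le_of_mul_le_mul_left ?_ (hW i)⟩
  calc W i * bval (u i) (bundle b k)
      ≤ bval (price W u) (bundle b k) := mul_bval_le_bval_price W u i _
    _ ≤ T := hb.le k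
    _ ≤ bval (price W u) (symmDiff (bundle b i) S) := hTS
    _ = W i * bval (u i) (symmDiff (bundle b i) S) := (mul_bval_eq_bval_price symmDiff_subset).symm

theorem stmt16_general [DecidableEq J] (hu : ∀ j, (∃ i, 0 < u i j) ∨ ∀ i, u i j < 0)
    (hnondeg : Nondegenerate u) {j₀ : J} {c V η : ℝ} (hc : 0 < c) (hj₀ : ∀ i, u i j₀ = c)
    (hV : ∀ i j, |u i j| ≤ V) (hη : 0 < η)
    (hηc : n * ((Fintype.card J - 1) * (η * V)) ≤ c) :
    ∃ w ∈ stdSimplex ℝ (Fin n), ∃ A : Fin n → Finset J, IsAlloc A ∧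
      (∀ B : Fin n → Finset J, IsAlloc B →
        ∑ i, (w i + η) * bval (u i) (B i) ≤ ∑ i, (w i + η) * bval (u i) (A i)) ∧
      IEF1 u A := by
  obtain ⟨w, hw, hTop⟩ := exists_weights_forall_isTopSpender hc hj₀ hV hη (by simpa using hηc)
  have weight_pos : ∀ i, 0 < w i + η := fun i => add_pos_of_nonneg_of_pos (hw.1 i) hη
  have isForest : IsForest (demand (fun i => w i + η) u) :=
    hnondeg.isForest_demand fun j => price_ne_zero weight_pos (hu j)
  obtain ⟨T, b, hb, hreach⟩ := exists_isFeasible_forall_reachesUpToOne isForest hTop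
  exact ⟨w, hw, bundle b, isAlloc_bundle b, fun B hB => welfare_le_of_forall_mem_demand hb.mem hB,
    hb.ief1_bundle weight_pos hreach⟩

end Allocations

lemma exists_pos_or_forall_neg_of_perturbation {N : Type*} [Nonempty N] {m : ℕ}
    {v : N → Fin m → ℝ} {u : N → Fin (m + 1) → ℝ} {c ε : ℝ} (hc : 0 < c)
    (hlast : ∀ i, u i (Fin.last m) = c)
    (hpert : ∀ i j, v i j - ε ≤ u i j.castSucc ∧ u i j.castSucc ≤ v i j)
    (hε : ∀ i j, 0 < v i j → ε < v i j) (hv : ∀ j, (∃ i, 0 < v i j) ∨ ∀ i, v i j < 0)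
    (j : Fin (m + 1)) : (∃ i, 0 < u i j) ∨ ∀ i, u i j < 0 := by
  cases j using Fin.lastCases with
  | last => exact Or.inl ⟨Classical.arbitrary N, hc.trans_eq (hlast _).symm⟩
  | cast j =>
    exact (hv j).imp
      (fun ⟨i, hi⟩ => ⟨i, (sub_pos.2 (hε i j hi)).trans_le (hpert i j).1⟩)
      fun h i => (hpert i j).2.trans_lt (h i)

lemma lt_of_lt_min_div {m : ℕ} {x y ε : ℝ} (hε0 : 0 < ε) (hx : 0 < x)
    (hε : ε < min x y / (2 * m)) : 0 < m ∧ ε < x := by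
  obtain rfl | hm := m.eq_zero_or_pos
  · rw [Nat.cast_zero, mul_zero, div_zero] at hε
    exact absurd hε hε0.not_gt
  · have one_le : (1 : ℝ) ≤ m := by exact_mod_cast hm
    refine ⟨hm, hε.trans_le ?_⟩
    calc min x y / (2 * m) ≤ x / (2 * m) := by gcongr; exact min_le_left x y
      _ ≤ x := div_le_self hx.le (by linarith)

/-- for the non-degenerate perturbed instance `Ī` there exist a
weight vector `w*` in the simplex and an allocation maximizing the
`(w*+η)`-weighted welfare that is IEF1 for `Ī`. Simple cycles of length
`k ≥ 2` in the agents-items bipartite graph are encoded by injective maps from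
`Fin (k+2)`, whose cyclic addition realises the cyclic successor `ℓ + 1`. -/
theorem stmt16 (n m : ℕ) (hn : 0 < n)
    (v : Fin n → Fin m → ℝ) (vb : Fin n → Fin (m+1) → ℝ)
    (lam ω ε η V : ℝ)
    (htypes : ∀ j : Fin m,
      (∀ i, 0 < v i j) ∨ (∀ i, v i j < 0) ∨
      ((∀ i, 0 ≤ v i j) ∧ (∃ a, 0 < v a j) ∧ (∃ b, v b j = 0)))
    (hlam : 0 < lam)
    (hgap : ∀ (i : Fin n) (S T : Finset (Fin m)),
      0 < bval (v i) S - bval (v i) T → lam ≤ bval (v i) S - bval (v i) T)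
    (hω : 0 < ω)
    (hgapSW : ∀ A B : Fin n → Finset (Fin m), IsAlloc A → IsAlloc B →
      0 < (∑ i, bval (v i) (A i)) - (∑ i, bval (v i) (B i)) →
      ω ≤ (∑ i, bval (v i) (A i)) - (∑ i, bval (v i) (B i)))
    (hε0 : 0 < ε) (hε : ε < min lam (n * ω) / (2 * m))
    (hlast : ∀ i, vb i (Fin.last m) = lam / 2)
    (hpert : ∀ (i : Fin n) (j : Fin m),
      v i j - ε ≤ vb i j.castSucc ∧ vb i j.castSucc ≤ v i j)
    (hzero : ∀ (i : Fin n) (j : Fin m), vb i j.castSucc = 0 ↔ v i j = 0)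
    (hnondeg : ∀ (k : ℕ) (js : Fin (k+2) → Fin (m+1)) (ags : Fin (k+2) → Fin n),
      Function.Injective js → Function.Injective ags →
      (∀ l, vb (ags l) (js l) ≠ 0 ∧ vb (ags l) (js (l+1)) ≠ 0) →
      (∏ l, vb (ags l) (js l) / vb (ags l) (js (l+1))) ≠ 1)
    (hV : 0 < V) (hVub : ∀ i j, |vb i j| ≤ V) (hVmem : ∃ i j, |vb i j| = V)
    (hη : η = lam / (2 * m * n * V)) :
    ∃ w ∈ stdSimplex ℝ (Fin n), ∃ A : Fin n → Finset (Fin (m+1)), IsAlloc A ∧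
      (∀ B : Fin n → Finset (Fin (m+1)), IsAlloc B →
        ∑ i, (w i + η) * bval (vb i) (B i) ≤ ∑ i, (w i + η) * bval (vb i) (A i)) ∧
      IEF1 vb A := by
  have : NeZero n := ⟨hn.ne'⟩
  obtain ⟨hm, ε_lt⟩ := lt_of_lt_min_div hε0 hlam hε
  have lt_of_pos : ∀ i j, 0 < v i j → ε < v i j := fun i j hij =>
    ε_lt.trans_le (by simpa [bval] using hgap i {j} ∅ (by simpa [bval] using hij))
  have pos_or_neg : ∀ j, (∃ i, 0 < v i j) ∨ ∀ i, v i j < 0 := fun j =>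
    (htypes j).elim (fun h => Or.inl ⟨0, h 0⟩) fun h => h.symm.imp (fun h => h.2.1) id
  exact stmt16_general
    (exists_pos_or_forall_neg_of_perturbation (half_pos hlam) hlast hpert lt_of_pos pos_or_neg)
    hnondeg (half_pos hlam) hlast hVub (by rw [hη]; positivity)
    (le_of_eq (by rw [Fintype.card_fin, Nat.cast_succ, add_sub_cancel_right, hη]; field_simp))
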